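/- If P is an extremal POVM with finite outcome set E on ℂ^d such that the number of outcomes e with P_e ≠ 0 equals d², then P is rank-one and informationally complete: every nonzero element P_e has rank one, and the elements {P_e}_{e∈E} span the full matrix space M_d(ℂ) over ℂ. -/

import Mathlib

/-!
If a family `D` with `∑ e, D e = 0` satisfies `-C • P e ≤ D e ≤ C • P e` for some `C > 0`, then
`P ± C⁻¹ • D` are again POVMs, so extremality of `P` forces `D = 0`.

For `D e = c e • P e` this says that the nonzero `P e` are linearly independent over `ℝ`, hence over
`ℂ` because they are self-adjoint. There being `d ^ 2` of them, they span `M_d(ℂ)`.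

A nonzero `P e₀` dominates some rank-one `B ≥ 0`, which, being self-adjoint, is a real combination
`∑ e, c e • P e`. The family `D` with `D e₀ = B - c e₀ • P e₀` and `D e = -c e • P e` otherwise must
vanish, so `P e₀` is proportional to `B`.
-/

open Matrix
open scoped ComplexOrder

/-- A POVM with finite outcome set `E` on `ℂ^d`: a family of positive semidefinite
matrices summing to the identity. -/
def IsPOVM {d : ℕ} {E : Type*} [Fintype E] (P : E → Matrix (Fin d) (Fin d) ℂ) : Prop :=
  (∀ e, (P e).PosSemidef) ∧ ∑ e, P e = 1

/-- A POVM is extremal if it is an extreme point of the convex set of POVMs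
inside the real vector space of families `E → M_d(ℂ)`. -/
def IsExtremalPOVM {d : ℕ} {E : Type*} [Fintype E] (P : E → Matrix (Fin d) (Fin d) ℂ) : Prop :=
  P ∈ Set.extremePoints ℝ {Q : E → Matrix (Fin d) (Fin d) ℂ | IsPOVM Q}

/-- The convex set of ways to write `u` as a sum of nonnegative elements indexed by `E`. For the
Loewner order on matrices and `u = 1` these are the POVMs with outcome set `E`. -/
def nonnegDecompositions {M : Type*} [AddCommMonoid M] [Preorder M] (E : Type*) [Fintype E]
    (u : M) : Set (E → M) :=
  {P | 0 ≤ P ∧ ∑ e, P e = u}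

section ExtremePoints

variable {𝕜 : Type*} [Field 𝕜] [LinearOrder 𝕜] [IsStrictOrderedRing 𝕜]

lemma eq_zero_of_add_mem_of_sub_mem_of_mem_extremePoints {V : Type*} [AddCommGroup V] [Module 𝕜 V]
    {S : Set V} {x y : V} (hx : x ∈ S.extremePoints 𝕜) (hadd : x + y ∈ S) (hsub : x - y ∈ S) :
    y = 0 := by
  have hmid : x ∈ openSegment 𝕜 (x + y) (x - y) :=
    ⟨1 / 2, 1 / 2, by norm_num, by norm_num, by norm_num, by module⟩
  simpa using hx.2 hadd hsub hmid

namespace nonnegDecompositions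

variable {M : Type*} [AddCommGroup M] [PartialOrder M] [IsOrderedAddMonoid M] [Module 𝕜 M]
  [IsOrderedModule 𝕜 M] {E : Type*} [Fintype E] {u : M} {P : E → M}

lemma eq_zero_of_neg_smul_le_of_le_smul
    (hP : P ∈ (nonnegDecompositions E u).extremePoints 𝕜) {D : E → M} {C : 𝕜} (hC : 0 < C)
    (hlower : -(C • P) ≤ D) (hupper : D ≤ C • P) (hsum : ∑ e, D e = 0) : D = 0 := by
  have hPsum : ∑ e, P e = u := hP.1.2
  have hlower' : -P ≤ C⁻¹ • D := by
    simpa [hC.ne'] using smul_le_smul_of_nonneg_left hlower (inv_nonneg.2 hC.le)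
  have hupper' : C⁻¹ • D ≤ P := by
    simpa [hC.ne'] using smul_le_smul_of_nonneg_left hupper (inv_nonneg.2 hC.le)
  have hscaled : C⁻¹ • D = 0 := by
    refine eq_zero_of_add_mem_of_sub_mem_of_mem_extremePoints hP ⟨?_, ?_⟩ ⟨?_, ?_⟩
    · exact neg_le_iff_add_nonneg'.1 hlower'
    · simp [Finset.sum_add_distrib, ← Finset.smul_sum, hsum, hPsum]
    · exact sub_nonneg.2 hupper'
    · simp [Finset.sum_sub_distrib, ← Finset.smul_sum, hsum, hPsum]
  exact (smul_eq_zero.1 hscaled).resolve_left (inv_ne_zero hC.ne')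

lemma eq_smul_of_le_of_sum_eq
    (hP : P ∈ (nonnegDecompositions E u).extremePoints 𝕜) {X : E → M} (hX : 0 ≤ X) (hXP : X ≤ P)
    {c : E → 𝕜} (hsum : ∑ e, X e = ∑ e, c e • P e) (e : E) : X e = c e • P e := by
  set K : 𝕜 := ∑ i, |c i|
  have hcK (i : E) : |c i| ≤ K :=
    Finset.single_le_sum (fun j _ ↦ abs_nonneg (c j)) (Finset.mem_univ i)
  have hP0 (i : E) : 0 ≤ P i := hP.1.1 i
  have hlower : -((1 + K) • P) ≤ fun i ↦ X i - c i • P i := fun i ↦ calc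
    -((1 + K) • P i) ≤ -(c i • P i) :=
      neg_le_neg (smul_le_smul_of_nonneg_right (by linarith [le_abs_self (c i), hcK i]) (hP0 i))
    _ ≤ X i - c i • P i := by simpa [sub_eq_add_neg] using hX i
  have hupper : (fun i ↦ X i - c i • P i) ≤ (1 + K) • P := fun i ↦ calc
    X i - c i • P i ≤ P i - c i • P i := sub_le_sub_right (hXP i) _
    _ = (1 - c i) • P i := by module
    _ ≤ (1 + K) • P i :=
      smul_le_smul_of_nonneg_right (by linarith [neg_abs_le (c i), hcK i]) (hP0 i)
  have hK : 0 < 1 + K :=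
    add_pos_of_pos_of_nonneg one_pos (Finset.sum_nonneg fun i _ ↦ abs_nonneg (c i))
  have hzero := eq_zero_of_neg_smul_le_of_le_smul hP hK hlower hupper
    (by simp [Finset.sum_sub_distrib, hsum])
  exact sub_eq_zero.1 (congrFun hzero e)

lemma linearIndepOn_support (hP : P ∈ (nonnegDecompositions E u).extremePoints 𝕜) :
    LinearIndepOn 𝕜 P (Function.support P) := by
  classical
  rw [← Set.coe_toFinset (Function.support P), linearIndepOn_finset_iff]
  intro c hc e he
  have hsum : ∑ i, c i • P i = 0 := by
    rw [← hc]
    exact (Finset.sum_subset (Finset.subset_univ _) (by simp +contextual)).symm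
  have hzero : 0 = c e • P e := eq_smul_of_le_of_sum_eq hP le_rfl hP.1.1 (by simp [hsum]) e
  exact (smul_eq_zero.1 hzero.symm).resolve_right (by simpa using he)

lemma exists_smul_eq_of_le_of_mem_span
    (hP : P ∈ (nonnegDecompositions E u).extremePoints 𝕜) {e : E} {x : M} (hx : 0 ≤ x)
    (hxP : x ≤ P e) (hspan : x ∈ Submodule.span 𝕜 (Set.range P)) : ∃ c : 𝕜, c • P e = x := by
  classical
  obtain ⟨c, hc⟩ := (Submodule.mem_span_range_iff_exists_fun 𝕜).1 hspan
  have hle : Pi.single e x ≤ P := by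
    intro i
    obtain rfl | hi := eq_or_ne i e
    · simpa using hxP
    · simpa [hi] using hP.1.1 i
  have hsum : ∑ i, Pi.single (M := fun _ ↦ M) e x i = ∑ i, c i • P i := by simp [hc]
  have hx_eq := eq_smul_of_le_of_sum_eq hP (Pi.single_nonneg.2 hx) hle hsum e
  exact ⟨c e, by simpa using hx_eq.symm⟩

end nonnegDecompositions

end ExtremePoints

section SelfAdjoint

open scoped ComplexStarModule

variable {A : Type*} [AddCommGroup A] [Module ℂ A] [StarAddMonoid A] [StarModule ℂ A]
  {ι : Type*} {a : ι → A}

lemma coe_realPart_sum_smul (ha : ∀ i, IsSelfAdjoint (a i)) (s : Finset ι) (c : ι → ℂ) :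
    (ℜ (∑ i ∈ s, c i • a i) : A) = ∑ i ∈ s, (c i).re • a i := by
  simp only [map_sum, AddSubgroup.val_finsetSum]
  exact Finset.sum_congr rfl fun i _ ↦ by
    simp [realPart_smul, (ha i).coe_realPart, (ha i).imaginaryPart]

lemma coe_imaginaryPart_sum_smul (ha : ∀ i, IsSelfAdjoint (a i)) (s : Finset ι) (c : ι → ℂ) :
    (ℑ (∑ i ∈ s, c i • a i) : A) = ∑ i ∈ s, (c i).im • a i := by
  simp only [map_sum, AddSubgroup.val_finsetSum]
  exact Finset.sum_congr rfl fun i _ ↦ by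
    simp [imaginaryPart_smul, (ha i).coe_realPart, (ha i).imaginaryPart]

lemma linearIndependent_complex_of_isSelfAdjoint (ha : ∀ i, IsSelfAdjoint (a i))
    (hlin : LinearIndependent ℝ a) : LinearIndependent ℂ a := by
  rw [linearIndependent_iff'] at hlin ⊢
  intro s c hc i hi
  have hre : ∑ j ∈ s, (c j).re • a j = 0 := by
    simp [← coe_realPart_sum_smul ha, hc]
  have him : ∑ j ∈ s, (c j).im • a j = 0 := by
    simp [← coe_imaginaryPart_sum_smul ha, hc]
  exact Complex.ext (hlin s _ hre i hi) (hlin s _ him i hi)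

lemma span_complex_range_eq_top_of_isSelfAdjoint [FiniteDimensional ℂ A] {s : Set ι}
    (ha : ∀ i, IsSelfAdjoint (a i)) (hlin : LinearIndepOn ℝ a s)
    (hcard : s.ncard = Module.finrank ℂ A) : Submodule.span ℂ (Set.range a) = ⊤ := by
  have hlinℂ : LinearIndependent ℂ fun i : s ↦ a i :=
    linearIndependent_complex_of_isSelfAdjoint (fun i ↦ ha i) hlin
  have : Finite s := hlinℂ.finite
  have : Fintype s := Fintype.ofFinite s
  rw [← Nat.card_coe_set_eq, Nat.card_eq_fintype_card] at hcard
  rw [eq_top_iff, ← hlinℂ.span_eq_top_of_card_eq_finrank' hcard]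
  exact Submodule.span_mono (Set.range_comp_subset_range _ _)

lemma mem_span_real_of_isSelfAdjoint {x : A} (hx : IsSelfAdjoint x) (ha : ∀ i, IsSelfAdjoint (a i))
    (hspan : x ∈ Submodule.span ℂ (Set.range a)) : x ∈ Submodule.span ℝ (Set.range a) := by
  obtain ⟨c, rfl⟩ := Finsupp.mem_span_range_iff_exists_finsupp.1 hspan
  rw [← hx.coe_realPart, Finsupp.sum, coe_realPart_sum_smul ha]
  exact Submodule.sum_smul_mem _ _ fun i _ ↦ Submodule.subset_span (Set.mem_range_self i)

end SelfAdjoint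

section Loewner

open scoped MatrixOrder

lemma matrix_rank_pos {m n K : Type*} [Fintype n] [Field K] {A : Matrix m n K} (hA : A ≠ 0) :
    0 < A.rank := by
  refine Nat.pos_of_ne_zero fun hrank ↦ hA (mulVec_injective ?_)
  have hzero : A.mulVecLin = 0 := LinearMap.range_eq_bot.1 (Submodule.finrank_eq_zero.1 hrank)
  exact congrArg DFunLike.coe (hzero.trans mulVecLin_zero.symm)

lemma exists_rank_eq_one_le {𝕜 n : Type*} [RCLike 𝕜] [Fintype n] {A : Matrix n n 𝕜} (hA : 0 ≤ A)
    (hA0 : A ≠ 0) : ∃ B : Matrix n n 𝕜, 0 ≤ B ∧ B ≤ A ∧ B.rank = 1 := by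
  obtain ⟨m, v, rfl⟩ := posSemidef_iff_eq_sum_vecMulVec.1 hA.posSemidef
  obtain ⟨k, -, hk⟩ := Finset.exists_ne_zero_of_sum_ne_zero hA0
  have hnonneg (i : Fin m) : 0 ≤ vecMulVec (v i) (star (v i)) :=
    (posSemidef_vecMulVec_self_star _).nonneg
  exact ⟨vecMulVec (v k) (star (v k)), hnonneg k,
    Finset.single_le_sum (fun i _ ↦ hnonneg i) (Finset.mem_univ k),
    (rank_vecMulVec_le _ _).antisymm (matrix_rank_pos hk)⟩

lemma rank_eq_one_of_mem_extremePoints {n E : Type*} [Fintype n] [Fintype E] {u : Matrix n n ℂ}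
    {P : E → Matrix n n ℂ} (hP : P ∈ (nonnegDecompositions E u).extremePoints ℝ)
    (hspan : Submodule.span ℂ (Set.range P) = ⊤) {e : E} (he : P e ≠ 0) : (P e).rank = 1 := by
  have hnonneg (i : E) : 0 ≤ P i := hP.1.1 i
  obtain ⟨B, hB, hBP, hrank⟩ := exists_rank_eq_one_le (hnonneg e) he
  have hBspan : B ∈ Submodule.span ℝ (Set.range P) :=
    mem_span_real_of_isSelfAdjoint (.of_nonneg hB) (fun i ↦ .of_nonneg (hnonneg i))
      (hspan ▸ Submodule.mem_top)
  obtain ⟨c, rfl⟩ := nonnegDecompositions.exists_smul_eq_of_le_of_mem_span hP hB hBP hBspan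
  have hc : (c : ℂ) ≠ 0 := by
    intro hc
    simp [Complex.ofReal_eq_zero.1 hc] at hrank
  rwa [← Complex.coe_smul, rank_smul_of_mem_nonZeroDivisors _ (mem_nonZeroDivisors_of_ne_zero hc)]
    at hrank

lemma isExtremalPOVM_iff_mem_extremePoints {d : ℕ} {E : Type*} [Fintype E]
    {P : E → Matrix (Fin d) (Fin d) ℂ} :
    IsExtremalPOVM P ↔ P ∈ (nonnegDecompositions E 1).extremePoints ℝ := by
  simp only [IsExtremalPOVM, IsPOVM, nonnegDecompositions, Pi.le_def, Pi.zero_apply,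
    nonneg_iff_posSemidef]

theorem stmt10_general {n E : Type*} [Fintype n] [Fintype E] {u : Matrix n n ℂ}
    {P : E → Matrix n n ℂ} (hP : P ∈ (nonnegDecompositions E u).extremePoints ℝ)
    (hcard : (Function.support P).ncard = Fintype.card n ^ 2) :
    (∀ e, P e ≠ 0 → (P e).rank = 1) ∧ Submodule.span ℂ (Set.range P) = ⊤ := by
  have hspan : Submodule.span ℂ (Set.range P) = ⊤ :=
    span_complex_range_eq_top_of_isSelfAdjoint (fun e ↦ .of_nonneg (hP.1.1 e))
      (nonnegDecompositions.linearIndepOn_support hP)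
      (by rw [hcard, Module.finrank_matrix, Module.finrank_self, mul_one, sq])
  exact ⟨fun _ he ↦ rank_eq_one_of_mem_extremePoints hP hspan he, hspan⟩

end Loewner

theorem stmt10 {d : ℕ} (hd : 1 ≤ d) {E : Type*} [Fintype E]
    (P : E → Matrix (Fin d) (Fin d) ℂ) (hP : IsPOVM P)
    (hext : IsExtremalPOVM P)
    (hcard : Fintype.card {e : E // P e ≠ 0} = d ^ 2) :
    (∀ e, P e ≠ 0 → (P e).rank = 1) ∧
      Submodule.span ℂ (Set.range P) = ⊤ :=
  stmt10_general (isExtremalPOVM_iff_mem_extremePoints.1 hext)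
    (by rw [Fintype.card_fin, ← hcard, ← Nat.card_eq_fintype_card]; rfl)
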